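/- arXiv:2503.00129 — 2 statements merged into one kernel-verified Lean document; each statement's English description precedes it below -/
import Mathlib

section
/- If β ≥ γ ≥ 0 and β + γ > 1, then for all real k₁, k₂, the integral ∫_ℝ ⟨τ−k₁⟩^{−β} ⟨τ−k₂⟩^{−γ} dτ is bounded by a constant (depending only on β, γ) times ⟨k₁−k₂⟩^{−γ} φ_β(k₁−k₂), where φ_β(k) = 1 if β > 1, φ_β(k) = log(1+⟨k⟩) if β = 1, and φ_β(k) = ⟨k⟩^{1−β} if β < 1. -/
open MeasureTheory Real

noncomputable def jb (x : ℝ) : ℝ := Real.sqrt (1 + x ^ 2)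

noncomputable def phi (β k : ℝ) : ℝ :=
  if 1 < β then 1 else if β = 1 then Real.log (1 + jb k) else (jb k) ^ (1 - β)

/-!
Put `K = ⟨k₁ - k₂⟩`. When `τ` is nearer to `k₁` than to `k₂`, the triangle inequality makes
`⟨τ - k₂⟩` comparable to `max (1 + |τ - k₁|) K`. When `τ` is nearer to `k₂`, moving the larger
exponent onto the smaller bracket only increases the integrand, because `γ ≤ β`, and this reduces
to the first case with `k₁` and `k₂` exchanged. So it suffices to integrate
`u ^ (-β) * max u K ^ (-γ)` over `u = 1 + |τ - kᵢ| ≥ 1`. This gives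
`K ^ (-γ) ∫₁ᴷ u ^ (-β) du + ∫_K^∞ u ^ (-(β + γ)) du`: the first integral is `O(φ_β)`, and the
second is a multiple of `K ^ (-γ) * K ^ (1 - β)`, where again `K ^ (1 - β) = O(φ_β)`.
-/

lemma rpow_le_rpow_abs_mul_rpow {a b c : ℝ} (ha : 0 < a) (hb : 0 < b) (hab : a ≤ c * b)
    (hba : b ≤ c * a) (s : ℝ) : b ^ s ≤ c ^ |s| * a ^ s := by
  have hc : 0 < c := pos_of_mul_pos_left (hb.trans_le hba) ha.le
  rcases le_total 0 s with hs | hs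
  · calc b ^ s ≤ (c * a) ^ s := rpow_le_rpow hb.le hba hs
      _ = c ^ |s| * a ^ s := by rw [mul_rpow hc.le ha.le, abs_of_nonneg hs]
  · have hab' : c⁻¹ * a ≤ b := by rwa [inv_mul_le_iff₀ hc]
    calc b ^ s ≤ (c⁻¹ * a) ^ s := rpow_le_rpow_of_nonpos (by positivity) hab' hs
      _ = c ^ |s| * a ^ s := by
        rw [mul_rpow (by positivity) ha.le, abs_of_nonpos hs, inv_rpow hc.le, rpow_neg hc.le]

lemma rpow_mul_rpow_le_rpow_mul_rpow_of_le {x y s t : ℝ} (hx : 0 < x) (hxy : x ≤ y)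
    (hst : s ≤ t) : x ^ t * y ^ s ≤ x ^ s * y ^ t := by
  have hy : 0 < y := hx.trans_le hxy
  calc x ^ t * y ^ s = x ^ s * y ^ s * x ^ (t - s) := by
        rw [mul_right_comm, ← rpow_add hx, add_sub_cancel]
    _ ≤ x ^ s * y ^ s * y ^ (t - s) := by
        gcongr
    _ = x ^ s * y ^ t := by rw [mul_assoc, ← rpow_add hy, add_sub_cancel]

lemma one_le_jb (x : ℝ) : 1 ≤ jb x :=
  one_le_sqrt.2 (le_add_of_nonneg_right (sq_nonneg x))

lemma jb_pos (x : ℝ) : 0 < jb x := one_pos.trans_le (one_le_jb x)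

lemma abs_le_jb (x : ℝ) : |x| ≤ jb x :=
  le_sqrt_of_sq_le (by rw [sq_abs]; linarith)

lemma jb_le_one_add_abs (x : ℝ) : jb x ≤ 1 + |x| := by
  simpa only [jb, norm_eq_abs, sq_abs] using sqrt_one_add_norm_sq_le x

lemma jb_le_jb_of_abs_le_abs {x y : ℝ} (h : |x| ≤ |y|) : jb x ≤ jb y :=
  sqrt_le_sqrt (add_le_add_right (sq_le_sq.2 h) 1)

lemma jb_sub_comm (x y : ℝ) : jb (x - y) = jb (y - x) := by
  rw [jb, jb, sub_sq_comm]

lemma log_two_mul_jb_rpow_le_phi (β k : ℝ) : log 2 * jb k ^ (1 - β) ≤ phi β k := by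
  have hlog : log 2 ≤ 1 := (log_le_sub_one_of_pos two_pos).trans_eq (by norm_num)
  have hK : 1 ≤ jb k := one_le_jb k
  have hpow : 0 ≤ jb k ^ (1 - β) := rpow_nonneg (jb_pos k).le _
  unfold phi
  split_ifs with hβ hβ
  · exact mul_le_one₀ hlog hpow (rpow_le_one_of_one_le_of_nonpos hK (by linarith))
  · rw [hβ, sub_self, rpow_zero, mul_one]
    exact log_le_log two_pos (by linarith)
  · exact mul_le_of_le_one_left hpow hlog

lemma exists_integral_rpow_neg_le_mul_phi (β : ℝ) :
    ∃ C > 0, ∀ k : ℝ, ∫ u in (1 : ℝ)..jb k, u ^ (-β) ≤ C * phi β k := by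
  have integral_eq (hβ : β ≠ 1) (k : ℝ) :
      ∫ u in (1 : ℝ)..jb k, u ^ (-β) = (jb k ^ (1 - β) - 1) / (1 - β) := by
    have h0 : (0 : ℝ) ∉ Set.uIcc 1 (jb k) := Set.notMem_uIcc_of_lt one_pos (jb_pos k)
    rw [integral_rpow (Or.inr ⟨fun h => hβ (neg_injective h), h0⟩), one_rpow, neg_add_eq_sub]
  rcases lt_trichotomy β 1 with hβ | rfl | hβ
  · have hpos : 0 < 1 - β := sub_pos.2 hβ
    refine ⟨(1 - β)⁻¹, inv_pos.2 hpos, fun k => ?_⟩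
    rw [integral_eq hβ.ne, phi, if_neg hβ.not_gt, if_neg hβ.ne, div_eq_inv_mul]
    gcongr
    exact sub_le_self _ zero_le_one
  · refine ⟨1, one_pos, fun k => ?_⟩
    simp only [rpow_neg_one]
    rw [integral_inv_of_pos one_pos (jb_pos k), div_one, phi, if_neg (lt_irrefl 1), if_pos rfl,
      one_mul]
    exact log_le_log (jb_pos k) (by linarith)
  · have hpos : 0 < β - 1 := sub_pos.2 hβ
    refine ⟨(β - 1)⁻¹, inv_pos.2 hpos, fun k => ?_⟩
    rw [integral_eq hβ.ne', phi, if_pos hβ, ← neg_div_neg_eq, neg_sub, neg_sub, div_eq_inv_mul]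
    gcongr
    exact sub_le_self _ (rpow_nonneg (jb_pos k).le _)

lemma integral_comp_one_add_abs (f : ℝ → ℝ) :
    ∫ x, f (1 + |x|) = 2 * ∫ u in Set.Ioi 1, f u := by
  rw [integral_comp_abs (f := fun x => f (1 + x)),
    ← (measurePreserving_add_left volume (1 : ℝ)).setIntegral_preimage_emb
      (measurableEmbedding_addLeft 1) f, Set.preimage_const_add_Ioi, sub_self]

lemma integrableOn_Ioi_one_of_integrable_comp_one_add_abs {E : Type*} [NormedAddCommGroup E]
    {f : ℝ → E} (hf : Integrable fun x => f (1 + |x|)) : IntegrableOn f (Set.Ioi 1) := by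
  refine (hf.comp_sub_right 1).integrableOn.congr_fun (fun u hu => ?_) measurableSet_Ioi
  have hu' : 0 ≤ u - 1 := sub_nonneg.2 (le_of_lt hu)
  simp only [abs_of_nonneg hu', add_sub_cancel]

/-- The radial kernel `u ^ (-β) * max u K ^ (-γ)`, evaluated at `u = 1 + |τ - kᵢ|` to dominate the
product of the two brackets. It equals `K ^ (-γ) * u ^ (-β)` up to the scale `K` and
`u ^ (-(β + γ))` beyond it. -/
noncomputable def twoScaleKernel (β γ K u : ℝ) : ℝ := u ^ (-β) * max u K ^ (-γ)

section TwoScaleKernel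

variable {β γ K : ℝ}

lemma twoScaleKernel_nonneg {u : ℝ} (hu : 0 ≤ u) : 0 ≤ twoScaleKernel β γ K u :=
  mul_nonneg (rpow_nonneg hu _) (rpow_nonneg (hu.trans (le_max_left u K)) _)

lemma twoScaleKernel_of_le {u : ℝ} (hu : u ≤ K) :
    twoScaleKernel β γ K u = K ^ (-γ) * u ^ (-β) := by
  rw [twoScaleKernel, max_eq_right hu, mul_comm]

lemma twoScaleKernel_of_ge {u : ℝ} (hu : 0 < u) (hKu : K ≤ u) :
    twoScaleKernel β γ K u = u ^ (-(β + γ)) := by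
  rw [twoScaleKernel, max_eq_left hKu, neg_add, rpow_add hu]

lemma continuous_twoScaleKernel_one_add_abs :
    Continuous fun x : ℝ => twoScaleKernel β γ K (1 + |x|) := by
  have hpos (x : ℝ) : 0 < 1 + |x| := by positivity
  have hcont : Continuous fun x : ℝ => 1 + |x| := by fun_prop
  exact (hcont.rpow_const fun x => Or.inl (hpos x).ne').mul
    ((hcont.max continuous_const).rpow_const fun x => Or.inl (lt_max_of_lt_left (hpos x)).ne')

lemma twoScaleKernel_le_rpow (hK : 1 ≤ K) {u : ℝ} (hu : 1 ≤ u) :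
    twoScaleKernel β γ K u ≤ K ^ |γ| * u ^ (-(β + γ)) := by
  have hu0 : 0 < u := one_pos.trans_le hu
  have hmax : max u K ^ (-γ) ≤ K ^ |γ| * u ^ (-γ) := by
    rw [← abs_neg γ]
    exact rpow_le_rpow_abs_mul_rpow hu0 (lt_max_of_lt_left hu0)
      ((le_max_left u K).trans (le_mul_of_one_le_left (hu0.le.trans (le_max_left u K)) hK))
      (max_le (le_mul_of_one_le_left hu0.le hK) (le_mul_of_one_le_right (by linarith) hu)) (-γ)
  calc twoScaleKernel β γ K u ≤ u ^ (-β) * (K ^ |γ| * u ^ (-γ)) := by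
        rw [twoScaleKernel]
        gcongr
    _ = K ^ |γ| * u ^ (-(β + γ)) := by rw [neg_add, rpow_add hu0, mul_left_comm]

lemma integrable_twoScaleKernel_one_add_abs (hsum : 1 < β + γ) (hK : 1 ≤ K) :
    Integrable fun x : ℝ => twoScaleKernel β γ K (1 + |x|) := by
  have hdom : Integrable fun x : ℝ => (1 + |x|) ^ (-(β + γ)) := by
    simpa only [norm_eq_abs] using
      integrable_one_add_norm (E := ℝ) (μ := volume) (r := β + γ) (by simpa using hsum)
  refine (hdom.const_mul (K ^ |γ|)).mono'
    continuous_twoScaleKernel_one_add_abs.aestronglyMeasurable (ae_of_all _ fun x => ?_)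
  rw [norm_of_nonneg (twoScaleKernel_nonneg (by positivity))]
  exact twoScaleKernel_le_rpow hK (le_add_of_nonneg_right (abs_nonneg x))

lemma setIntegral_Ioi_one_twoScaleKernel (hsum : 1 < β + γ) (hK : 1 ≤ K) :
    ∫ u in Set.Ioi 1, twoScaleKernel β γ K u =
      K ^ (-γ) * (∫ u in (1 : ℝ)..K, u ^ (-β)) + K ^ (-γ) * K ^ (1 - β) / (β + γ - 1) := by
  have hK0 : 0 < K := one_pos.trans_le hK
  have hint : IntegrableOn (twoScaleKernel β γ K) (Set.Ioi 1) :=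
    integrableOn_Ioi_one_of_integrable_comp_one_add_abs
      (integrable_twoScaleKernel_one_add_abs hsum hK)
  have head : ∫ u in Set.Ioc 1 K, twoScaleKernel β γ K u =
      K ^ (-γ) * ∫ u in (1 : ℝ)..K, u ^ (-β) := by
    rw [setIntegral_congr_fun measurableSet_Ioc fun u hu => twoScaleKernel_of_le hu.2,
      integral_const_mul, intervalIntegral.integral_of_le hK]
  have tail : ∫ u in Set.Ioi K, twoScaleKernel β γ K u =
      K ^ (-γ) * K ^ (1 - β) / (β + γ - 1) := by
    rw [setIntegral_congr_fun measurableSet_Ioi fun u hu =>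
        twoScaleKernel_of_ge (hK0.trans hu) (le_of_lt hu),
      integral_Ioi_rpow_of_lt (by linarith) hK0, ← rpow_add hK0, ← neg_div_neg_eq, neg_neg]
    congr 2 <;> ring
  rw [← Set.Ioc_union_Ioi_eq_Ioi hK,
    setIntegral_union (Set.Ioc_disjoint_Ioi le_rfl) measurableSet_Ioi
      (hint.mono_set Set.Ioc_subset_Ioi_self) (hint.mono_set (Set.Ioi_subset_Ioi hK)), head, tail]

lemma exists_integral_twoScaleKernel_le (hsum : 1 < β + γ) :
    ∃ C > 0, ∀ k : ℝ, ∫ x, twoScaleKernel β γ (jb k) (1 + |x|) ≤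
      C * jb k ^ (-γ) * phi β k := by
  obtain ⟨C, hC, hhead⟩ := exists_integral_rpow_neg_le_mul_phi β
  have hs : 0 < β + γ - 1 := sub_pos.2 hsum
  have hlog : 0 < log 2 := log_pos one_lt_two
  refine ⟨2 * (C + (log 2)⁻¹ / (β + γ - 1)),
    mul_pos two_pos (add_pos hC (div_pos (inv_pos.2 hlog) hs)), fun k => ?_⟩
  have hpow : 0 ≤ jb k ^ (-γ) := rpow_nonneg (jb_pos k).le _
  have htail : jb k ^ (1 - β) ≤ (log 2)⁻¹ * phi β k :=
    (le_inv_mul_iff₀ hlog).2 (log_two_mul_jb_rpow_le_phi β k)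
  rw [integral_comp_one_add_abs, setIntegral_Ioi_one_twoScaleKernel hsum (one_le_jb k)]
  calc 2 * (jb k ^ (-γ) * (∫ u in (1 : ℝ)..jb k, u ^ (-β)) +
        jb k ^ (-γ) * jb k ^ (1 - β) / (β + γ - 1))
      ≤ 2 * (jb k ^ (-γ) * (C * phi β k) +
        jb k ^ (-γ) * ((log 2)⁻¹ * phi β k) / (β + γ - 1)) := by
        gcongr
        exact hhead k
    _ = 2 * (C + (log 2)⁻¹ / (β + γ - 1)) * jb k ^ (-γ) * phi β k := by ring

end TwoScaleKernel

section Domination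

variable {β γ : ℝ}

lemma jb_rpow_mul_jb_rpow_le_of_abs_le_abs {x y : ℝ} (hxy : |x| ≤ |y|) :
    jb x ^ (-β) * jb y ^ (-γ) ≤
      2 ^ |β| * 3 ^ |γ| * twoScaleKernel β γ (jb (x - y)) (1 + |x|) := by
  have hx0 : 0 < 1 + |x| := by positivity
  have hx1 := one_le_jb x
  have hx2 := abs_le_jb x
  have hx3 := jb_le_one_add_abs x
  have hy1 := one_le_jb y
  have hy2 := abs_le_jb y
  have near : jb x ^ (-β) ≤ 2 ^ |β| * (1 + |x|) ^ (-β) := by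
    rw [← abs_neg β]
    exact rpow_le_rpow_abs_mul_rpow hx0 (jb_pos x) (by linarith) (by linarith) (-β)
  have max_le_far : max (1 + |x|) (jb (x - y)) ≤ 3 * jb y :=
    max_le (by linarith) (by linarith [jb_le_one_add_abs (x - y), abs_sub x y])
  have far_le_max : jb y ≤ 3 * max (1 + |x|) (jb (x - y)) := by
    linarith [jb_le_one_add_abs y, abs_sub_abs_le_abs_sub y x, abs_sub_comm y x,
      abs_le_jb (x - y), le_max_left (1 + |x|) (jb (x - y)),
      le_max_right (1 + |x|) (jb (x - y))]
  have far : jb y ^ (-γ) ≤ 3 ^ |γ| * max (1 + |x|) (jb (x - y)) ^ (-γ) := by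
    rw [← abs_neg γ]
    exact rpow_le_rpow_abs_mul_rpow (lt_max_of_lt_left hx0) (jb_pos y) max_le_far far_le_max (-γ)
  calc jb x ^ (-β) * jb y ^ (-γ)
      ≤ (2 ^ |β| * (1 + |x|) ^ (-β)) * (3 ^ |γ| * max (1 + |x|) (jb (x - y)) ^ (-γ)) :=
        mul_le_mul near far (rpow_nonneg (jb_pos y).le _) (by positivity)
    _ = 2 ^ |β| * 3 ^ |γ| * twoScaleKernel β γ (jb (x - y)) (1 + |x|) := by
        rw [twoScaleKernel, mul_mul_mul_comm]

lemma jb_rpow_mul_jb_rpow_le (hβγ : γ ≤ β) (x y : ℝ) :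
    jb x ^ (-β) * jb y ^ (-γ) ≤ 2 ^ |β| * 3 ^ |γ| *
      (twoScaleKernel β γ (jb (x - y)) (1 + |x|) +
        twoScaleKernel β γ (jb (x - y)) (1 + |y|)) := by
  have hx : 0 ≤ twoScaleKernel β γ (jb (x - y)) (1 + |x|) := twoScaleKernel_nonneg (by positivity)
  have hy : 0 ≤ twoScaleKernel β γ (jb (x - y)) (1 + |y|) := twoScaleKernel_nonneg (by positivity)
  rcases le_total |x| |y| with hxy | hyx
  · refine (jb_rpow_mul_jb_rpow_le_of_abs_le_abs hxy).trans ?_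
    gcongr
    exact le_add_of_nonneg_right hy
  · calc jb x ^ (-β) * jb y ^ (-γ) = jb y ^ (-γ) * jb x ^ (-β) := mul_comm _ _
      _ ≤ jb y ^ (-β) * jb x ^ (-γ) :=
        rpow_mul_rpow_le_rpow_mul_rpow_of_le (jb_pos y) (jb_le_jb_of_abs_le_abs hyx)
          (neg_le_neg hβγ)
      _ ≤ 2 ^ |β| * 3 ^ |γ| * twoScaleKernel β γ (jb (x - y)) (1 + |y|) := by
        rw [jb_sub_comm x y]
        exact jb_rpow_mul_jb_rpow_le_of_abs_le_abs hyx
      _ ≤ _ := by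
        gcongr
        exact le_add_of_nonneg_left hx

lemma integral_jb_rpow_mul_jb_rpow_le (hβγ : γ ≤ β) (hsum : 1 < β + γ) (k₁ k₂ : ℝ) :
    ∫ τ, jb (τ - k₁) ^ (-β) * jb (τ - k₂) ^ (-γ) ≤
      2 * (2 ^ |β| * 3 ^ |γ|) * ∫ x, twoScaleKernel β γ (jb (k₁ - k₂)) (1 + |x|) := by
  set G : ℝ → ℝ := fun x => twoScaleKernel β γ (jb (k₁ - k₂)) (1 + |x|)
  have hG : Integrable G := integrable_twoScaleKernel_one_add_abs hsum (one_le_jb _)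
  have hG₁ : Integrable fun τ => G (τ - k₁) := hG.comp_sub_right k₁
  have hG₂ : Integrable fun τ => G (τ - k₂) := hG.comp_sub_right k₂
  calc ∫ τ, jb (τ - k₁) ^ (-β) * jb (τ - k₂) ^ (-γ)
      ≤ ∫ τ, 2 ^ |β| * 3 ^ |γ| * (G (τ - k₁) + G (τ - k₂)) := by
        refine integral_mono_of_nonneg (ae_of_all _ fun τ => ?_)
          ((hG₁.add hG₂).const_mul _) (ae_of_all _ fun τ => ?_)
        · exact mul_nonneg (rpow_nonneg (jb_pos _).le _) (rpow_nonneg (jb_pos _).le _)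
        · have hsub : jb (τ - k₁ - (τ - k₂)) = jb (k₁ - k₂) := by
            rw [sub_sub_sub_cancel_left, jb_sub_comm]
          simpa only [hsub] using jb_rpow_mul_jb_rpow_le hβγ (τ - k₁) (τ - k₂)
    _ = 2 * (2 ^ |β| * 3 ^ |γ|) * ∫ x, G x := by
        rw [integral_const_mul, integral_add hG₁ hG₂, integral_sub_right_eq_self G k₁,
          integral_sub_right_eq_self G k₂]
        ring

end Domination

theorem stmt0_general (β γ : ℝ) (hβγ : γ ≤ β) (hsum : 1 < β + γ) :
    ∃ C > 0, ∀ k₁ k₂ : ℝ,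
      (∫ τ : ℝ, (jb (τ - k₁)) ^ (-β) * (jb (τ - k₂)) ^ (-γ)) ≤
        C * (jb (k₁ - k₂)) ^ (-γ) * phi β (k₁ - k₂) := by
  obtain ⟨C, hC, hkernel⟩ := exists_integral_twoScaleKernel_le hsum
  refine ⟨2 * (2 ^ |β| * 3 ^ |γ|) * C, by positivity, fun k₁ k₂ => ?_⟩
  calc ∫ τ, jb (τ - k₁) ^ (-β) * jb (τ - k₂) ^ (-γ)
      ≤ 2 * (2 ^ |β| * 3 ^ |γ|) * ∫ x, twoScaleKernel β γ (jb (k₁ - k₂)) (1 + |x|) :=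
        integral_jb_rpow_mul_jb_rpow_le hβγ hsum k₁ k₂
    _ ≤ 2 * (2 ^ |β| * 3 ^ |γ|) * (C * jb (k₁ - k₂) ^ (-γ) * phi β (k₁ - k₂)) := by
        gcongr
        exact hkernel (k₁ - k₂)
    _ = 2 * (2 ^ |β| * 3 ^ |γ|) * C * jb (k₁ - k₂) ^ (-γ) * phi β (k₁ - k₂) := by ring

theorem stmt0 (β γ : ℝ) (hγ : 0 ≤ γ) (hβγ : γ ≤ β) (hsum : 1 < β + γ) :
    ∃ C > 0, ∀ k₁ k₂ : ℝ,
      (∫ τ : ℝ, (jb (τ - k₁)) ^ (-β) * (jb (τ - k₂)) ^ (-γ)) ≤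
        C * (jb (k₁ - k₂)) ^ (-γ) * phi β (k₁ - k₂) :=
  stmt0_general β γ hβγ hsum
end

section
/- Let ρ be a Schwartz function on ℝ whose Fourier transform satisfies ρ̂(0) = 0 and ρ̂′(0) = 0 (ρ has vanishing zeroth and first moments). Define T(g)(x,y) = ∫_ℝ ρ(ξ₂ y) ℱ_y g(x, ξ₂) dξ₂ for Schwartz g on ℝ². Then for every s ≥ −1/2, ‖T(g)‖_{H^s(ℝ²)} ≲ ‖g‖_{H^s(ℝ²)}. -/
open MeasureTheory ENNReal

noncomputable def jb2 (ξ : ℝ × ℝ) : ℝ := Real.sqrt (1 + ξ.1 ^ 2 + ξ.2 ^ 2)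

/-- The (2d) Fourier transform. -/
noncomputable def FT2 (u : ℝ × ℝ → ℂ) (θ : ℝ × ℝ) : ℂ :=
  ∫ p : ℝ × ℝ, Complex.exp (-Complex.I * (p.1 * θ.1 + p.2 * θ.2)) * u p

/-- The squared `H^s(ℝ²)` norm, defined via the Fourier transform. -/
noncomputable def HsNormSq (s : ℝ) (u : ℝ × ℝ → ℂ) : ℝ≥0∞ :=
  ∫⁻ θ : ℝ × ℝ, ENNReal.ofReal ((jb2 θ) ^ (2 * s) * ‖FT2 u θ‖ ^ 2)

/-!
Moving the Fourier transform from `g(x, ·)` to `ρ` turns the operator into an average of dilates,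
`T g(x, y) = ∫ ρ̂(η) g(x, ηy) dη`. Taking the Fourier transform under the integral sign,
`(T g)^(θ₁, θ₂) = ∫ ρ̂(η) |η|⁻¹ ĝ(θ₁, θ₂/η) dη`, and by a change of variables the `H^s` weighted
`L²` norm of `ĝ(θ₁, θ₂/η)` is at most `|η|^{1/2} (1 + |η|^s)` times that of `ĝ`. Minkowski's
inequality thus bounds `T` by `∫ |ρ̂(η)| (|η|^{-1/2} + |η|^{s-1/2}) dη`, which is finite for
`s > -3/2` because `ρ̂` is a Schwartz function vanishing at `0`; the same vanishing makes
`∫ |ρ̂(η)| |η|⁻¹ dη` finite, which is what the exchange of integrals needs.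
-/

open Module
open scoped SchwartzMap

section Minkowski

variable {α β : Type*} [MeasurableSpace α] [MeasurableSpace β] {μ : Measure α} {ν : Measure β}

lemma lintegral_mul_le_rpow_half_mul_rpow_half {f g : α → ℝ≥0∞} (hf : AEMeasurable f μ)
    (hg : AEMeasurable g μ) :
    ∫⁻ x, f x * g x ∂μ ≤
      (∫⁻ x, f x ^ 2 ∂μ) ^ (1 / 2 : ℝ) * (∫⁻ x, g x ^ 2 ∂μ) ^ (1 / 2 : ℝ) := by
  simpa only [Pi.mul_apply, ENNReal.rpow_ofNat] using
    ENNReal.lintegral_mul_le_Lp_mul_Lq μ Real.HolderConjugate.two_two hf hg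

-- Minkowski's integral inequality in `L²`: expanding the square reduces it to Cauchy–Schwarz.
lemma lintegral_sq_lintegral_le_sq_lintegral_rpow_half [SFinite μ] [SFinite ν] {f : α → β → ℝ≥0∞}
    (hf : Measurable (Function.uncurry f)) :
    ∫⁻ x, (∫⁻ y, f x y ∂ν) ^ 2 ∂μ ≤ (∫⁻ y, (∫⁻ x, f x y ^ 2 ∂μ) ^ (1 / 2 : ℝ) ∂ν) ^ 2 := by
  have hfx (x : α) : Measurable (f x) := hf.comp measurable_prodMk_left
  have hfy (y : β) : Measurable (f · y) := hf.comp measurable_prodMk_right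
  have hnorm : Measurable fun y ↦ (∫⁻ x, f x y ^ 2 ∂μ) ^ (1 / 2 : ℝ) :=
    (hf.pow_const 2).lintegral_prod_left'.pow_const _
  have hmul : Measurable fun q : (α × β) × β ↦ f q.1.1 q.1.2 * f q.1.1 q.2 :=
    (hf.comp (by fun_prop : Measurable fun q : (α × β) × β ↦ (q.1.1, q.1.2))).mul
      (hf.comp (by fun_prop : Measurable fun q : (α × β) × β ↦ (q.1.1, q.2)))
  calc ∫⁻ x, (∫⁻ y, f x y ∂ν) ^ 2 ∂μ
      = ∫⁻ x, ∫⁻ y, ∫⁻ z, f x y * f x z ∂ν ∂ν ∂μ := by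
        refine lintegral_congr fun x ↦ ?_
        rw [sq, lintegral_lintegral_mul (hfx x).aemeasurable (hfx x).aemeasurable]
    _ = ∫⁻ y, ∫⁻ x, ∫⁻ z, f x y * f x z ∂ν ∂μ ∂ν :=
        lintegral_lintegral_swap hmul.lintegral_prod_right'.aemeasurable
    _ = ∫⁻ y, ∫⁻ z, ∫⁻ x, f x y * f x z ∂μ ∂ν ∂ν := by
        refine lintegral_congr fun y ↦ lintegral_lintegral_swap ?_
        exact (hmul.comp
          (by fun_prop : Measurable fun q : α × β ↦ ((q.1, y), q.2))).aemeasurable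
    _ ≤ ∫⁻ y, ∫⁻ z, (∫⁻ x, f x y ^ 2 ∂μ) ^ (1 / 2 : ℝ) *
          (∫⁻ x, f x z ^ 2 ∂μ) ^ (1 / 2 : ℝ) ∂ν ∂ν := by
        gcongr with y z
        exact lintegral_mul_le_rpow_half_mul_rpow_half (hfy y).aemeasurable (hfy z).aemeasurable
    _ = (∫⁻ y, (∫⁻ x, f x y ^ 2 ∂μ) ^ (1 / 2 : ℝ) ∂ν) ^ 2 := by
        rw [lintegral_lintegral_mul hnorm.aemeasurable hnorm.aemeasurable, sq]

end Minkowski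

section SchwartzWeights

variable {E F : Type*} [NormedAddCommGroup E] [NormedSpace ℝ E] [NormedAddCommGroup F]
  [NormedSpace ℝ F]

lemma exists_norm_le_mul_norm_of_apply_zero (h : 𝓢(E, F)) (h0 : h 0 = 0) :
    ∃ C, 0 ≤ C ∧ ∀ x, ‖h x‖ ≤ C * ‖x‖ := by
  refine ⟨SchwartzMap.seminorm ℝ 0 1 h, apply_nonneg _ _, fun x ↦ ?_⟩
  have hderiv (y : E) : ‖fderiv ℝ h y‖ ≤ SchwartzMap.seminorm ℝ 0 1 h := by
    simpa [norm_iteratedFDeriv_one] using SchwartzMap.le_seminorm ℝ 0 1 h y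
  simpa [h0] using convex_univ.norm_image_sub_le_of_norm_fderiv_le
    (fun y _ ↦ h.differentiableAt) (fun y _ ↦ hderiv y) (Set.mem_univ 0) (Set.mem_univ x)

variable [MeasurableSpace E] [BorelSpace E] [FiniteDimensional ℝ E] (μ : Measure E)
  [μ.IsAddHaarMeasure]

lemma integrableOn_ball_norm_rpow [Nontrivial E] {r : ℝ} (hr : -(finrank ℝ E : ℝ) < r) (R : ℝ) :
    IntegrableOn (fun x : E ↦ ‖x‖ ^ r) (Metric.ball 0 R) μ := by
  have hball : (Metric.ball (0 : E) R).indicator (fun x ↦ ‖x‖ ^ r) =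
      fun x ↦ (Set.Iio R).indicator (· ^ r) ‖x‖ := by
    ext x
    simp only [Set.indicator, mem_ball_zero_iff, Set.mem_Iio]
  rw [← integrable_indicator_iff Metric.isOpen_ball.measurableSet, hball,
    integrable_fun_norm_addHaar]
  have hpow : IntegrableOn (fun y : ℝ ↦ y ^ (finrank ℝ E - 1 + r)) (Set.Ioo 0 R) := by
    rcases le_or_gt R 0 with hR | hR
    · simp [hR]
    · exact (intervalIntegral.integrableOn_Ioo_rpow_iff hR).2 (by linarith)
  rw [← integrable_indicator_iff measurableSet_Ioo] at hpow
  rw [← integrable_indicator_iff measurableSet_Ioi]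
  refine hpow.congr (.of_forall fun y ↦ ?_)
  by_cases hy : 0 < y
  · have hdim : ((finrank ℝ E - 1 : ℕ) : ℝ) = finrank ℝ E - 1 := by
      rw [Nat.cast_sub finrank_pos, Nat.cast_one]
    by_cases hyR : y < R <;>
      simp [hy, hyR, Set.indicator, Real.rpow_add hy, ← Real.rpow_natCast, hdim]
  · simp [hy]

-- At infinity Schwartz decay absorbs any power; near `0` the zero of `h` gains one power of `‖x‖`.
lemma integrable_norm_rpow_mul_norm_of_apply_zero [Nontrivial E] (h : 𝓢(E, F)) (h0 : h 0 = 0)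
    {r : ℝ} (hr : -(finrank ℝ E : ℝ) - 1 < r) :
    Integrable (fun x ↦ ‖x‖ ^ r * ‖h x‖) μ := by
  obtain ⟨C, hC0, hC⟩ := exists_norm_le_mul_norm_of_apply_zero h h0
  obtain ⟨N, hN⟩ := exists_nat_ge r
  have hmeas : Measurable fun x : E ↦ ‖x‖ ^ r * ‖h x‖ :=
    (measurable_norm.pow_const r).mul h.continuous.norm.measurable
  rw [← integrableOn_univ, ← Set.union_compl_self (Metric.ball (0 : E) 1)]
  refine IntegrableOn.union ?_ ?_
  · refine ((integrableOn_ball_norm_rpow μ (r := r + 1) (by linarith) 1).const_mul C).mono'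
      hmeas.aestronglyMeasurable (.of_forall fun x ↦ ?_)
    rw [Real.norm_of_nonneg (by positivity)]
    rcases eq_or_ne x 0 with rfl | hx
    · simp only [h0, norm_zero, mul_zero]
      positivity
    · calc ‖x‖ ^ r * ‖h x‖ ≤ ‖x‖ ^ r * (C * ‖x‖) := by gcongr; exact hC x
        _ = C * ‖x‖ ^ (r + 1) := by rw [Real.rpow_add_one (norm_ne_zero_iff.2 hx)]; ring
  · refine (h.integrable_pow_mul μ N).integrableOn.mono' hmeas.aestronglyMeasurable
      (ae_restrict_of_forall_mem Metric.isOpen_ball.measurableSet.compl fun x hx ↦ ?_)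
    have hx1 : 1 ≤ ‖x‖ := by simpa using hx
    rw [Real.norm_of_nonneg (by positivity), ← Real.rpow_natCast]
    gcongr

end SchwartzWeights

section FT1

/-- The one-dimensional Fourier transform `∫ e^{-iyξ} f(y) dy`, normalised like `FT2`. -/
noncomputable def FT1 (f : ℝ → ℂ) (ξ : ℝ) : ℂ :=
  ∫ y : ℝ, Complex.exp (-Complex.I * (y * ξ)) * f y

lemma FT1_eq_fourierIntegral (f : ℝ → ℂ) :
    FT1 f = VectorFourier.fourierIntegral Real.probChar volume (LinearMap.mul ℝ ℝ) f := by
  ext ξ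
  simp only [FT1, VectorFourier.fourierIntegral_probChar, LinearMap.mul_apply', smul_eq_mul,
    Complex.ofReal_mul, neg_mul, mul_comm Complex.I]

lemma continuous_FT1 {f : ℝ → ℂ} (hf : Integrable f) : Continuous (FT1 f) := by
  rw [FT1_eq_fourierIntegral]
  exact VectorFourier.fourierIntegral_continuous Real.continuous_probChar
    (by simpa using continuous_mul) hf

lemma integral_FT1_mul {f g : ℝ → ℂ} (hf : Integrable f) (hg : Integrable g) :
    ∫ ξ, FT1 f ξ * g ξ = ∫ η, f η * FT1 g η := by
  have hflip : (LinearMap.mul ℝ ℝ).flip = LinearMap.mul ℝ ℝ := by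
    ext
    simp
  simpa only [FT1_eq_fourierIntegral, smul_eq_mul, hflip] using
    VectorFourier.integral_fourierIntegral_smul_eq_flip (L := LinearMap.mul ℝ ℝ)
      Real.continuous_probChar (by simpa using continuous_mul) hf hg

lemma FT1_comp_mul_left (f : ℝ → ℂ) {y : ℝ} (hy : y ≠ 0) (ξ : ℝ) :
    FT1 (fun t ↦ f (y * t)) ξ = |y|⁻¹ * FT1 f (ξ / y) := by
  rw [FT1, FT1, ← abs_inv, ← Complex.real_smul, ← Measure.integral_comp_mul_left]
  refine integral_congr_ae (.of_forall fun t ↦ ?_)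
  have : (y : ℂ) ≠ 0 := mod_cast hy
  simp only [Complex.ofReal_mul, Complex.ofReal_div]
  field_simp

lemma integral_comp_mul_mul_FT1 {ρ f : ℝ → ℂ} (hρ : Integrable ρ) (hf : Integrable f) {y : ℝ}
    (hy : y ≠ 0) : ∫ ξ, ρ (ξ * y) * FT1 f ξ = ∫ η, FT1 ρ η * f (η * y) := by
  calc ∫ ξ, ρ (ξ * y) * FT1 f ξ = ∫ ξ, ρ (ξ * y) * FT1 f (ξ * y / y) := by
        simp only [mul_div_cancel_right₀ _ hy]
    _ = ∫ ξ, ρ ξ * (|y|⁻¹ * FT1 f (ξ / y)) := by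
        rw [Measure.integral_comp_mul_right (fun ξ ↦ ρ ξ * FT1 f (ξ / y)), abs_inv,
          Complex.real_smul, Complex.ofReal_inv, ← integral_const_mul]
        simp only [mul_left_comm]
    _ = ∫ ξ, ρ ξ * FT1 (fun t ↦ f (y * t)) ξ := by simp only [FT1_comp_mul_left f hy]
    _ = ∫ η, FT1 ρ η * f (η * y) := by
        rw [← integral_FT1_mul hρ (hf.comp_mul_left' hy)]
        simp only [mul_comm y]

lemma FT1_apply_zero (f : ℝ → ℂ) : FT1 f 0 = ∫ y, f y := by simp [FT1]

open FourierTransform in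
lemma FT1_eq_fourier (f : ℝ → ℂ) (ξ : ℝ) : FT1 f ξ = 𝓕 f (ξ * (2 * Real.pi)⁻¹) := by
  rw [Real.fourier_real_eq_integral_exp_smul, FT1]
  refine integral_congr_ae (.of_forall fun y ↦ ?_)
  have : (Real.pi : ℂ) ≠ 0 := mod_cast Real.pi_ne_zero
  simp only [smul_eq_mul]
  push_cast
  field_simp

lemma exists_schwartzMap_coe_eq_FT1 (ρ : 𝓢(ℝ, ℂ)) : ∃ h : 𝓢(ℝ, ℂ), ⇑h = FT1 ρ := by
  have hπ : (2 * Real.pi)⁻¹ ≠ 0 := by positivity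
  refine ⟨SchwartzMap.compCLMOfContinuousLinearEquiv ℝ
    (ContinuousLinearEquiv.unitsEquivAut ℝ (Units.mk0 _ hπ)) (FourierTransform.fourier ρ), ?_⟩
  ext ξ
  simp [FT1_eq_fourier, SchwartzMap.fourier_coe, -mul_inv_rev]

end FT1

section SndDilation

/-- The dilation `(x, y) ↦ (x, ηy)` of the second variable; it intertwines the operator
`dilationTransform` with averages over `η`. -/
def sndDilation (η : ℝ) (p : ℝ × ℝ) : ℝ × ℝ := (p.1, η * p.2)

lemma measurable_uncurry_sndDilation :
    Measurable fun q : (ℝ × ℝ) × ℝ ↦ sndDilation q.2 q.1 := by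
  unfold sndDilation
  fun_prop

variable {η : ℝ}

lemma sndDilation_sndDilation_inv (hη : η ≠ 0) (p : ℝ × ℝ) :
    sndDilation η (sndDilation η⁻¹ p) = p := by
  simp [sndDilation, hη]

lemma measurableEmbedding_sndDilation (hη : η ≠ 0) : MeasurableEmbedding (sndDilation η) :=
  ((MeasurableEquiv.refl ℝ).prodCongr (MeasurableEquiv.mulLeft₀ η hη)).measurableEmbedding

lemma map_sndDilation_volume (hη : η ≠ 0) :
    Measure.map (sndDilation η) volume = ENNReal.ofReal |η|⁻¹ • volume := by
  have hprod : sndDilation η = Prod.map id (η * ·) := rfl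
  rw [hprod, Measure.volume_eq_prod, ← Measure.map_prod_map _ _ measurable_id (by fun_prop),
    Measure.map_id, Real.map_volume_mul_left hη, Measure.prod_smul_right, abs_inv]

lemma quasiMeasurePreserving_sndDilation (hη : η ≠ 0) :
    Measure.QuasiMeasurePreserving (sndDilation η) :=
  ⟨(measurableEmbedding_sndDilation hη).measurable, by
    rw [map_sndDilation_volume hη]
    exact Measure.smul_absolutelyContinuous⟩

lemma lintegral_comp_sndDilation (hη : η ≠ 0) (f : ℝ × ℝ → ℝ≥0∞) :
    ∫⁻ p, f (sndDilation η p) = ENNReal.ofReal |η|⁻¹ * ∫⁻ p, f p := by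
  rw [← (measurableEmbedding_sndDilation hη).lintegral_map, map_sndDilation_volume hη,
    lintegral_smul_measure, smul_eq_mul]

variable {E : Type*} [NormedAddCommGroup E]

lemma integrable_comp_sndDilation {f : ℝ × ℝ → E} (hf : Integrable f) (hη : η ≠ 0) :
    Integrable fun p ↦ f (sndDilation η p) := by
  refine ((measurableEmbedding_sndDilation hη).integrable_map_iff (g := f)).1 ?_
  rw [map_sndDilation_volume hη]
  exact hf.smul_measure ofReal_ne_top

lemma integral_comp_sndDilation [NormedSpace ℝ E] (hη : η ≠ 0) (f : ℝ × ℝ → E) :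
    ∫ p, f (sndDilation η p) = |η|⁻¹ • ∫ p, f p := by
  rw [← (measurableEmbedding_sndDilation hη).integral_map, map_sndDilation_volume hη,
    integral_smul_measure, toReal_ofReal (by positivity)]

lemma integrable_mul_comp_sndDilation {F : ℝ → ℂ} (hFm : AEStronglyMeasurable F)
    (hF : Integrable fun η ↦ |η|⁻¹ * ‖F η‖) {g : ℝ × ℝ → ℂ} (hg : Integrable g) :
    Integrable (fun q : (ℝ × ℝ) × ℝ ↦ F q.2 * g (sndDilation q.2 q.1)) (volume.prod volume) := by
  have hη : ∀ᵐ η : ℝ, η ≠ 0 := Measure.ae_ne volume 0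
  have hmeas : AEStronglyMeasurable
      (fun q : (ℝ × ℝ) × ℝ ↦ F q.2 * g (sndDilation q.2 q.1)) (volume.prod volume) :=
    hFm.comp_snd.mul <| hg.aestronglyMeasurable.comp_quasiMeasurePreserving <|
      QuasiMeasurePreserving.prod_of_left measurable_uncurry_sndDilation <|
        hη.mono fun η hη ↦ quasiMeasurePreserving_sndDilation hη
  rw [integrable_prod_iff' hmeas]
  refine ⟨hη.mono fun η hη ↦ (integrable_comp_sndDilation hg hη).const_mul (F η), ?_⟩
  refine (hF.mul_const (∫ p, ‖g p‖)).congr (hη.mono fun η hη ↦ ?_)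
  simp only [norm_mul, integral_const_mul, integral_comp_sndDilation hη (‖g ·‖), smul_eq_mul]
  ring

end SndDilation

section FT2

lemma norm_exp_neg_I_mul_add (p θ : ℝ × ℝ) :
    ‖Complex.exp (-Complex.I * (p.1 * θ.1 + p.2 * θ.2))‖ = 1 := by
  simp [Complex.norm_exp]

lemma continuous_FT2 {u : ℝ × ℝ → ℂ} (hu : Integrable u) : Continuous (FT2 u) := by
  refine continuous_of_dominated (bound := (‖u ·‖)) (fun θ ↦ ?_) (fun θ ↦ ?_) hu.norm ?_
  · exact (by fun_prop : Continuous fun p : ℝ × ℝ ↦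
      Complex.exp (-Complex.I * (p.1 * θ.1 + p.2 * θ.2))).aestronglyMeasurable.mul
      hu.aestronglyMeasurable
  · exact .of_forall fun p ↦ by rw [norm_mul, norm_exp_neg_I_mul_add, one_mul]
  · exact .of_forall fun p ↦ by fun_prop

lemma FT2_congr_ae {u v : ℝ × ℝ → ℂ} (h : u =ᵐ[volume] v) : FT2 u = FT2 v :=
  funext fun θ ↦ integral_congr_ae <| h.mono fun p hp ↦ by simp only [hp]

lemma FT2_comp_sndDilation {η : ℝ} (hη : η ≠ 0) (u : ℝ × ℝ → ℂ) (θ : ℝ × ℝ) :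
    FT2 (fun p ↦ u (sndDilation η p)) θ = (|η|⁻¹ : ℝ) * FT2 u (sndDilation η⁻¹ θ) := by
  rw [FT2, FT2, ← Complex.real_smul, ← integral_comp_sndDilation hη]
  refine integral_congr_ae (.of_forall fun p ↦ ?_)
  have : (η : ℂ) ≠ 0 := mod_cast hη
  simp only [sndDilation, Complex.ofReal_mul, Complex.ofReal_inv]
  field_simp

lemma FT2_integral_mul_comp_sndDilation {F : ℝ → ℂ} (hFm : AEStronglyMeasurable F)
    (hF : Integrable fun η ↦ |η|⁻¹ * ‖F η‖) {g : ℝ × ℝ → ℂ} (hg : Integrable g) (θ : ℝ × ℝ) :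
    FT2 (fun p ↦ ∫ η, F η * g (sndDilation η p)) θ =
      ∫ η, F η * ((|η|⁻¹ : ℝ) * FT2 g (sndDilation η⁻¹ θ)) := by
  set e : ℝ × ℝ → ℂ := fun p ↦ Complex.exp (-Complex.I * (p.1 * θ.1 + p.2 * θ.2))
  have hprod : Integrable (fun q : (ℝ × ℝ) × ℝ ↦ e q.1 * (F q.2 * g (sndDilation q.2 q.1)))
      (volume.prod volume) :=
    (integrable_mul_comp_sndDilation hFm hF hg).bdd_mul
      (by fun_prop : Continuous fun q : (ℝ × ℝ) × ℝ ↦ e q.1).aestronglyMeasurable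
      (.of_forall fun q ↦ (norm_exp_neg_I_mul_add q.1 θ).le)
  calc FT2 (fun p ↦ ∫ η, F η * g (sndDilation η p)) θ
      = ∫ p, ∫ η, e p * (F η * g (sndDilation η p)) := by
        simp only [integral_const_mul]
        rfl
    _ = ∫ η, ∫ p, e p * (F η * g (sndDilation η p)) := integral_integral_swap hprod
    _ = ∫ η, F η * FT2 (fun p ↦ g (sndDilation η p)) θ := by
        simp only [mul_left_comm (e _), integral_const_mul]
        rfl
    _ = ∫ η, F η * ((|η|⁻¹ : ℝ) * FT2 g (sndDilation η⁻¹ θ)) :=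
        integral_congr_ae <| (Measure.ae_ne volume 0).mono fun η hη ↦ by
          simp only [FT2_comp_sndDilation hη]

end FT2

section DilationTransform

/-- The operator `T` with profile `ρ`: it multiplies the partial Fourier transform of `g` in the
second variable by `ρ(ξy)`, with the spatial variable `y` left in the multiplier. -/
noncomputable def dilationTransform (ρ : ℝ → ℂ) (g : ℝ × ℝ → ℂ) (p : ℝ × ℝ) : ℂ :=
  ∫ ξ, ρ (ξ * p.2) * FT1 (fun y ↦ g (p.1, y)) ξ

lemma dilationTransform_ae_eq {ρ : ℝ → ℂ} (hρ : Integrable ρ) {g : ℝ × ℝ → ℂ}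
    (hg : Integrable g) :
    dilationTransform ρ g =ᵐ[volume] fun p ↦ ∫ η, FT1 ρ η * g (sndDilation η p) := by
  have hslice : ∀ᵐ p : ℝ × ℝ, Integrable fun y ↦ g (p.1, y) :=
    Measure.quasiMeasurePreserving_fst.ae hg.prod_right_ae
  have hne : ∀ᵐ p : ℝ × ℝ, p.2 ≠ 0 :=
    Measure.quasiMeasurePreserving_snd.ae (Measure.ae_ne volume 0)
  filter_upwards [hslice, hne] with p hp hp0
  exact integral_comp_mul_mul_FT1 hρ hp hp0

lemma FT2_dilationTransform {ρ : ℝ → ℂ} (hρ : Integrable ρ)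
    (hρ0 : Integrable fun η ↦ |η|⁻¹ * ‖FT1 ρ η‖) {g : ℝ × ℝ → ℂ} (hg : Integrable g)
    (θ : ℝ × ℝ) :
    FT2 (dilationTransform ρ g) θ =
      ∫ η, FT1 ρ η * ((|η|⁻¹ : ℝ) * FT2 g (sndDilation η⁻¹ θ)) := by
  rw [FT2_congr_ae (dilationTransform_ae_eq hρ hg),
    FT2_integral_mul_comp_sndDilation (continuous_FT1 hρ).aestronglyMeasurable hρ0 hg]

end DilationTransform

section SobolevScaling

lemma rpow_le_add_of_mem_uIcc {u v x : ℝ} (hu : 0 < u) (hv : 0 < v) (hx : x ∈ Set.uIcc u v)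
    (s : ℝ) : x ^ s ≤ u ^ s + v ^ s := by
  wlog huv : u ≤ v generalizing u v
  · rw [add_comm]
    exact this hv hu (Set.uIcc_comm u v ▸ hx) (le_of_not_ge huv)
  obtain ⟨hux, hxv⟩ := Set.uIcc_of_le huv ▸ hx
  rcases le_total 0 s with hs | hs
  · exact (Real.rpow_le_rpow (hu.le.trans hux) hxv hs).trans
      (le_add_of_nonneg_left (by positivity))
  · exact (Real.rpow_le_rpow_of_nonpos hu hux hs).trans (le_add_of_nonneg_right (by positivity))

lemma continuous_jb2 : Continuous jb2 := by
  unfold jb2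
  fun_prop

lemma jb2_pos (θ : ℝ × ℝ) : 0 < jb2 θ := Real.sqrt_pos.2 (by positivity)

lemma jb2_sndDilation_mem_uIcc (η : ℝ) (θ : ℝ × ℝ) :
    jb2 (sndDilation η θ) ∈ Set.uIcc (jb2 θ) (|η| * jb2 θ) := by
  have hmul : |η| * jb2 θ = √(η ^ 2 * (1 + θ.1 ^ 2 + θ.2 ^ 2)) := by
    rw [jb2, Real.sqrt_mul (sq_nonneg η), Real.sqrt_sq_eq_abs]
  rw [hmul, Set.mem_uIcc]
  simp only [jb2, sndDilation]
  rcases le_total (η ^ 2) 1 with hη | hη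
  · right
    constructor <;> apply Real.sqrt_le_sqrt <;> nlinarith [sq_nonneg θ.1, sq_nonneg θ.2]
  · left
    constructor <;> apply Real.sqrt_le_sqrt <;> nlinarith [sq_nonneg θ.1, sq_nonneg θ.2]

lemma jb2_sndDilation_rpow_le {η : ℝ} (hη : η ≠ 0) (s : ℝ) (θ : ℝ × ℝ) :
    jb2 (sndDilation η θ) ^ s ≤ (1 + |η| ^ s) * jb2 θ ^ s := by
  have hη' : 0 < |η| := abs_pos.2 hη
  calc jb2 (sndDilation η θ) ^ s ≤ jb2 θ ^ s + (|η| * jb2 θ) ^ s :=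
        rpow_le_add_of_mem_uIcc (jb2_pos θ) (mul_pos hη' (jb2_pos θ))
          (jb2_sndDilation_mem_uIcc η θ) s
    _ = (1 + |η| ^ s) * jb2 θ ^ s := by rw [Real.mul_rpow hη'.le (jb2_pos θ).le]; ring

lemma HsNormSq_eq_lintegral_sq (s : ℝ) (u : ℝ × ℝ → ℂ) :
    HsNormSq s u = ∫⁻ θ, (ENNReal.ofReal (jb2 θ ^ s) * ‖FT2 u θ‖ₑ) ^ 2 := by
  refine lintegral_congr fun θ ↦ ?_
  have hs : 0 ≤ jb2 θ ^ s := Real.rpow_nonneg (jb2_pos θ).le s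
  rw [← ofReal_norm, ← ENNReal.ofReal_mul hs, ← ENNReal.ofReal_pow (by positivity),
    mul_pow, ← Real.rpow_mul_natCast (jb2_pos θ).le, Nat.cast_ofNat, mul_comm s]

lemma lintegral_sq_FT2_sndDilation_inv_le {η : ℝ} (hη : η ≠ 0) (s : ℝ) (u : ℝ × ℝ → ℂ) :
    ∫⁻ θ, (ENNReal.ofReal (jb2 θ ^ s) * ‖FT2 u (sndDilation η⁻¹ θ)‖ₑ) ^ 2 ≤
      ENNReal.ofReal (|η| ^ (1 / 2 : ℝ) * (1 + |η| ^ s)) ^ 2 * HsNormSq s u := by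
  have hη' : 0 < |η| := abs_pos.2 hη
  have hweight (θ : ℝ × ℝ) : ENNReal.ofReal (jb2 (sndDilation η θ) ^ s) ≤
      ENNReal.ofReal (1 + |η| ^ s) * ENNReal.ofReal (jb2 θ ^ s) := by
    rw [← ENNReal.ofReal_mul (by positivity)]
    exact ENNReal.ofReal_le_ofReal (jb2_sndDilation_rpow_le hη s θ)
  have hsq : (|η| ^ (1 / 2 : ℝ)) ^ 2 = |η| := by
    rw [← Real.sqrt_eq_rpow, Real.sq_sqrt hη'.le]
  calc ∫⁻ θ, (ENNReal.ofReal (jb2 θ ^ s) * ‖FT2 u (sndDilation η⁻¹ θ)‖ₑ) ^ 2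
      = ENNReal.ofReal |η| *
          ∫⁻ θ, (ENNReal.ofReal (jb2 (sndDilation η θ) ^ s) * ‖FT2 u θ‖ₑ) ^ 2 := by
        simpa [sndDilation_sndDilation_inv hη] using lintegral_comp_sndDilation (inv_ne_zero hη)
          fun θ ↦ (ENNReal.ofReal (jb2 (sndDilation η θ) ^ s) * ‖FT2 u θ‖ₑ) ^ 2
    _ ≤ ENNReal.ofReal |η| * ∫⁻ θ, ENNReal.ofReal (1 + |η| ^ s) ^ 2 *
          (ENNReal.ofReal (jb2 θ ^ s) * ‖FT2 u θ‖ₑ) ^ 2 := by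
        gcongr with θ
        rw [← mul_pow, ← mul_assoc]
        gcongr
        exact hweight θ
    _ = ENNReal.ofReal (|η| ^ (1 / 2 : ℝ) * (1 + |η| ^ s)) ^ 2 * HsNormSq s u := by
        rw [lintegral_const_mul' _ _ (by finiteness), ← HsNormSq_eq_lintegral_sq, ← mul_assoc,
          ENNReal.ofReal_mul (by positivity), mul_pow,
          ← ENNReal.ofReal_pow (p := |η| ^ (1 / 2 : ℝ)) (by positivity), hsq]

end SobolevScaling

section SobolevBound

lemma sq_mul_rpow_half (a b : ℝ≥0∞) : (a ^ 2 * b) ^ (1 / 2 : ℝ) = a * b ^ (1 / 2 : ℝ) := by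
  rw [ENNReal.mul_rpow_of_nonneg _ _ (by norm_num), ← ENNReal.rpow_ofNat, ← ENNReal.rpow_mul]
  norm_num

lemma inv_mul_rpow_half_mul_one_add_rpow {x : ℝ} (hx : 0 < x) (s : ℝ) :
    x⁻¹ * (x ^ (1 / 2 : ℝ) * (1 + x ^ s)) = x ^ (-(1 / 2) : ℝ) + x ^ (s - 1 / 2) := by
  rw [← Real.rpow_neg_one, ← mul_assoc, ← Real.rpow_add hx, mul_add, mul_one, ← Real.rpow_add hx]
  ring_nf

lemma rpow_half_lintegral_sq_mul_FT2_sndDilation_inv_le {η : ℝ} (hη : η ≠ 0) (s : ℝ)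
    (c : ℂ) (u : ℝ × ℝ → ℂ) :
    (∫⁻ θ, (ENNReal.ofReal (jb2 θ ^ s) *
      ‖c * ((|η|⁻¹ : ℝ) * FT2 u (sndDilation η⁻¹ θ))‖ₑ) ^ 2) ^ (1 / 2 : ℝ) ≤
      ‖c‖ₑ * ENNReal.ofReal (|η| ^ (-(1 / 2) : ℝ) + |η| ^ (s - 1 / 2)) *
        HsNormSq s u ^ (1 / 2 : ℝ) := by
  have hη' : 0 < |η| := abs_pos.2 hη
  have hnorm : ‖((|η|⁻¹ : ℝ) : ℂ)‖ₑ = ENNReal.ofReal |η|⁻¹ := by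
    rw [← ofReal_norm, Complex.norm_real, Real.norm_of_nonneg (by positivity)]
  have hfactor (θ : ℝ × ℝ) :
      ENNReal.ofReal (jb2 θ ^ s) * ‖c * ((|η|⁻¹ : ℝ) * FT2 u (sndDilation η⁻¹ θ))‖ₑ =
        ‖c‖ₑ * ENNReal.ofReal |η|⁻¹ *
          (ENNReal.ofReal (jb2 θ ^ s) * ‖FT2 u (sndDilation η⁻¹ θ)‖ₑ) := by
    rw [enorm_mul, enorm_mul, hnorm]
    ring
  calc (∫⁻ θ, (ENNReal.ofReal (jb2 θ ^ s) *
          ‖c * ((|η|⁻¹ : ℝ) * FT2 u (sndDilation η⁻¹ θ))‖ₑ) ^ 2) ^ (1 / 2 : ℝ)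
      = ‖c‖ₑ * ENNReal.ofReal |η|⁻¹ * (∫⁻ θ, (ENNReal.ofReal (jb2 θ ^ s) *
          ‖FT2 u (sndDilation η⁻¹ θ)‖ₑ) ^ 2) ^ (1 / 2 : ℝ) := by
        simp only [hfactor, mul_pow (‖c‖ₑ * _)]
        rw [lintegral_const_mul' _ _ (by finiteness), sq_mul_rpow_half]
    _ ≤ ‖c‖ₑ * ENNReal.ofReal |η|⁻¹ * (ENNReal.ofReal (|η| ^ (1 / 2 : ℝ) * (1 + |η| ^ s)) ^ 2 *
          HsNormSq s u) ^ (1 / 2 : ℝ) := by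
        gcongr
        exact lintegral_sq_FT2_sndDilation_inv_le hη s u
    _ = ‖c‖ₑ * ENNReal.ofReal (|η| ^ (-(1 / 2) : ℝ) + |η| ^ (s - 1 / 2)) *
          HsNormSq s u ^ (1 / 2 : ℝ) := by
        rw [sq_mul_rpow_half, ← inv_mul_rpow_half_mul_one_add_rpow hη',
          ENNReal.ofReal_mul (p := |η|⁻¹) (by positivity)]
        simp only [mul_assoc]

lemma measurable_uncurry_jb2_rpow_mul_enorm_FT2 {F : ℝ → ℂ} (hF : Measurable F)
    {u : ℝ × ℝ → ℂ} (hu : Integrable u) (s : ℝ) :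
    Measurable (Function.uncurry fun θ η ↦
      ENNReal.ofReal (jb2 θ ^ s) * ‖F η * ((|η|⁻¹ : ℝ) * FT2 u (sndDilation η⁻¹ θ))‖ₑ) := by
  have hFT2 : Measurable fun q : (ℝ × ℝ) × ℝ ↦ FT2 u (sndDilation q.2⁻¹ q.1) :=
    (continuous_FT2 hu).measurable.comp
      (measurable_uncurry_sndDilation.comp (measurable_fst.prodMk measurable_snd.inv))
  have hjb2 := continuous_jb2.measurable
  unfold Function.uncurry
  fun_prop

lemma HsNormSq_dilationTransform_le {ρ : ℝ → ℂ} (hρ : Integrable ρ)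
    (hρ0 : Integrable fun η ↦ |η|⁻¹ * ‖FT1 ρ η‖) (s : ℝ) {g : ℝ × ℝ → ℂ} (hg : Integrable g) :
    HsNormSq s (dilationTransform ρ g) ≤
      (∫⁻ η, ‖FT1 ρ η‖ₑ * ENNReal.ofReal (|η| ^ (-(1 / 2) : ℝ) + |η| ^ (s - 1 / 2))) ^ 2 *
        HsNormSq s g := by
  set k : ℝ × ℝ → ℝ → ℂ := fun θ η ↦ FT1 ρ η * ((|η|⁻¹ : ℝ) * FT2 g (sndDilation η⁻¹ θ)) with hk
  calc HsNormSq s (dilationTransform ρ g)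
      = ∫⁻ θ, (ENNReal.ofReal (jb2 θ ^ s) * ‖∫ η, k θ η‖ₑ) ^ 2 := by
        simp only [HsNormSq_eq_lintegral_sq, FT2_dilationTransform hρ hρ0 hg, hk]
    _ ≤ ∫⁻ θ, (∫⁻ η, ENNReal.ofReal (jb2 θ ^ s) * ‖k θ η‖ₑ) ^ 2 := by
        gcongr with θ
        rw [lintegral_const_mul' _ _ ofReal_ne_top]
        gcongr
        exact enorm_integral_le_lintegral_enorm _
    _ ≤ (∫⁻ η, (∫⁻ θ, (ENNReal.ofReal (jb2 θ ^ s) * ‖k θ η‖ₑ) ^ 2) ^ (1 / 2 : ℝ)) ^ 2 :=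
        lintegral_sq_lintegral_le_sq_lintegral_rpow_half <|
          measurable_uncurry_jb2_rpow_mul_enorm_FT2 (continuous_FT1 hρ).measurable hg s
    _ ≤ (∫⁻ η, ‖FT1 ρ η‖ₑ * ENNReal.ofReal (|η| ^ (-(1 / 2) : ℝ) + |η| ^ (s - 1 / 2)) *
          HsNormSq s g ^ (1 / 2 : ℝ)) ^ 2 := by
        gcongr 1
        refine lintegral_mono_ae ((Measure.ae_ne volume 0).mono fun η hη ↦ ?_)
        exact rpow_half_lintegral_sq_mul_FT2_sndDilation_inv_le hη s (FT1 ρ η) g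
    _ = (∫⁻ η, ‖FT1 ρ η‖ₑ * ENNReal.ofReal (|η| ^ (-(1 / 2) : ℝ) + |η| ^ (s - 1 / 2))) ^ 2 *
          HsNormSq s g := by
        have hw : Measurable fun η ↦
            ‖FT1 ρ η‖ₑ * ENNReal.ofReal (|η| ^ (-(1 / 2) : ℝ) + |η| ^ (s - 1 / 2)) := by
          have := (continuous_FT1 hρ).measurable
          fun_prop
        rw [lintegral_mul_const _ hw, mul_pow, ← ENNReal.rpow_mul_natCast]
        norm_num

lemma integrable_abs_rpow_mul_norm_FT1 (ρ : 𝓢(ℝ, ℂ)) (h0 : ∫ x, ρ x = 0) {r : ℝ} (hr : -2 < r) :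
    Integrable fun η ↦ |η| ^ r * ‖FT1 ρ η‖ := by
  obtain ⟨h, hh⟩ := exists_schwartzMap_coe_eq_FT1 ρ
  have hh0 : h 0 = 0 := by rw [hh, FT1_apply_zero, h0]
  rw [← hh]
  exact integrable_norm_rpow_mul_norm_of_apply_zero volume h hh0
    (by rw [finrank_self, Nat.cast_one]; linarith)

end SobolevBound

theorem stmt18_general (ρ : 𝓢(ℝ, ℂ)) (h0 : ∫ x, ρ x = 0) {s : ℝ} (hs : -(3 / 2) < s) :
    ∃ C > 0, ∀ g : ℝ × ℝ → ℂ, Integrable g →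
      HsNormSq s (dilationTransform ρ g) ≤ ENNReal.ofReal C * HsNormSq s g := by
  set K : ℝ≥0∞ :=
    ∫⁻ η, ‖FT1 ρ η‖ₑ * ENNReal.ofReal (|η| ^ (-(1 / 2) : ℝ) + |η| ^ (s - 1 / 2))
  have hK_top : K ≠ ⊤ := by
    have hsum := (integrable_abs_rpow_mul_norm_FT1 ρ h0 (r := -(1 / 2)) (by norm_num)).add
      (integrable_abs_rpow_mul_norm_FT1 ρ h0 (r := s - 1 / 2) (by linarith))
    convert hsum.lintegral_lt_top.ne using 3 with η
    rw [Pi.add_apply, ← add_mul, mul_comm, ENNReal.ofReal_mul (by positivity), ofReal_norm]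
  have hρ0 : Integrable fun η ↦ |η|⁻¹ * ‖FT1 ρ η‖ := by
    simpa only [Real.rpow_neg_one] using
      integrable_abs_rpow_mul_norm_FT1 ρ h0 (r := -1) (by norm_num)
  refine ⟨(K ^ 2).toReal + 1, by positivity, fun g hg ↦ ?_⟩
  refine (HsNormSq_dilationTransform_le ρ.integrable hρ0 s hg).trans ?_
  gcongr
  exact (ofReal_toReal (pow_ne_top hK_top)).ge.trans (ENNReal.ofReal_le_ofReal (by linarith))

theorem stmt18 (ρ : SchwartzMap ℝ ℝ) (h0 : (∫ x : ℝ, ρ x) = 0)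
    (h1 : (∫ x : ℝ, x * ρ x) = 0) (s : ℝ) (hs : -(1 / 2) ≤ s) :
    ∃ C > 0, ∀ g : SchwartzMap (ℝ × ℝ) ℂ,
      HsNormSq s (fun p : ℝ × ℝ => ∫ ξ₂ : ℝ,
          (ρ (ξ₂ * p.2) : ℂ) * (∫ y : ℝ, Complex.exp (-Complex.I * (y * ξ₂)) * g (p.1, y))) ≤
        ENNReal.ofReal C * HsNormSq s (fun p => g p) := by
  obtain ⟨C, hC, hbound⟩ := stmt18_general (ρ.postcompCLM Complex.ofRealCLM)
    (by simpa [integral_complex_ofReal] using h0) (by linarith : -(3 / 2) < s)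
  exact ⟨C, hC, fun g ↦ hbound g g.integrable⟩
end
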